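/- arXiv:0906.2098 — 4 statements merged into one kernel-verified Lean document; each statement's English description precedes it below -/
import Mathlib

section
/- Let G be a chain graph with chain components 𝒯. A strictly positive joint probability mass function p obeys the block-recursive Markov property of type IV for G if and only if p factorizes as p(i) = ∏_{T∈𝒯} p(i_T | i_{pa_D(T)}) and, for each T ∈ 𝒯 and each nonempty A ⊆ T, the conditional multivariate logistic contrasts of p_{A|pa_D(T)} satisfy: η^{(A)}(i*_A | i_{pa_D(T)}) = Σ_{b ⊆ pa_G(A)} β^{(A)}_b(i*_A, i_b) for baseline-coded functions β^{(A)}_b when A is connected, and η^{(A)}(i*_A | i_{pa_D(T)}) = 0 when A is disconnected. -/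
open scoped Classical BigOperators

/-- A mixed graph on a node set `V`: a set of directed edges and a symmetric
irreflexive set of undirected edges, the two edge sets being disjoint. -/
structure MixedGraph (V : Type*) where
  dir : V → V → Prop
  undir : V → V → Prop
  undir_symm : ∀ {a b}, undir a b → undir b a
  undir_irrefl : ∀ a, ¬ undir a a
  edge_disjoint : ∀ a b, dir a b → ¬ undir a b

namespace MixedGraph

variable {V : Type*} [Fintype V] [DecidableEq V] (G : MixedGraph V)

/-- One step of a semi-directed path: an undirected edge or a directed edge
followed in the direction of traversal. -/
def step (a b : V) : Prop := G.dir a b ∨ G.undir a b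

/-- No semi-directed cycle: there is no directed edge `a → b` together with a
semi-directed path from `b` back to `a`. -/
def NoSemiDirectedCycle : Prop :=
  ∀ a b : V, G.dir a b → ¬ Relation.ReflTransGen G.step b a

/-- Two nodes are in the same chain component iff they are joined by a path of
undirected edges (the equivalence relation generated by the undirected part). -/
def sameComp (a b : V) : Prop := Relation.ReflTransGen G.undir a b

/-- The chain component of a node. -/
noncomputable def component (v : V) : Finset V :=
  Finset.univ.filter fun w => G.sameComp v w

/-- `T` is a chain component of `G`. -/
def IsComponent (T : Finset V) : Prop := ∃ v, T = G.component v

/-- The collection of chain components of `G`. -/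
noncomputable def componentsF : Finset (Finset V) :=
  Finset.univ.image fun v => G.component v

/-- The parents `pa_G(A)`: nodes outside `A` with a directed edge into `A`. -/
noncomputable def paG (A : Finset V) : Finset V :=
  Finset.univ.filter fun w => w ∉ A ∧ ∃ v ∈ A, G.dir w v

/-- The (inclusive) neighbours `Nb_G(A)`: `A` together with all nodes joined to
`A` by an undirected edge. -/
noncomputable def nbG (A : Finset V) : Finset V :=
  A ∪ Finset.univ.filter fun w => ∃ v ∈ A, G.undir v w

/-- The edge relation of the directed graph `D` of chain components:
`T₁ → T₂` iff they are distinct chain components and `G` has a directed edge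
from a node of `T₁` to a node of `T₂`. -/
def dirD (T₁ T₂ : Finset V) : Prop :=
  G.IsComponent T₁ ∧ G.IsComponent T₂ ∧ T₁ ≠ T₂ ∧ ∃ v ∈ T₁, ∃ w ∈ T₂, G.dir v w

/-- `pa_D(T)`: the union of the parent components of `T` in `D`. -/
noncomputable def paD (T : Finset V) : Finset V :=
  Finset.univ.filter fun w => G.dirD (G.component w) T

/-- `nd_D(T)`: the union of the components `T'` such that there is no directed
path from `T` to `T'` in `D`. -/
noncomputable def ndD (T : Finset V) : Finset V :=
  Finset.univ.filter fun w => ¬ Relation.ReflTransGen G.dirD T (G.component w)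

/-- A set of nodes `A` is connected if the subgraph of the undirected part of
`G` induced by `A` is connected (in particular nonempty). -/
def ConnectedIn (A : Finset V) : Prop :=
  A.Nonempty ∧ ∀ a ∈ A, ∀ b ∈ A,
    Relation.ReflTransGen (fun x y => x ∈ A ∧ y ∈ A ∧ G.undir x y) a b

/-- The connected component of `v` inside the induced subgraph on `A`. -/
noncomputable def compIn (A : Finset V) (v : V) : Finset V :=
  A.filter fun w =>
    Relation.ReflTransGen (fun x y => x ∈ A ∧ y ∈ A ∧ G.undir x y) v w

/-- The set of connected components of the induced subgraph on `A`. -/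
noncomputable def connComps (A : Finset V) : Finset (Finset V) :=
  A.image fun v => G.compIn A v

/-- `ord` is a strict total order of the chain components consistent with `G`:
`ord T T'` implies that `T` is not a parent component of `T'`. -/
def ConsistentOrder (ord : Finset V → Finset V → Prop) : Prop :=
  (∀ T₁ T₂, G.IsComponent T₁ → G.IsComponent T₂ → T₁ ≠ T₂ →
      ord T₁ T₂ ∨ ord T₂ T₁) ∧
  (∀ T, G.IsComponent T → ¬ ord T T) ∧
  (∀ T₁ T₂ T₃, G.IsComponent T₁ → G.IsComponent T₂ → G.IsComponent T₃ →
      ord T₁ T₂ → ord T₂ T₃ → ord T₁ T₃) ∧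
  (∀ T₁ T₂, G.IsComponent T₁ → G.IsComponent T₂ → ord T₁ T₂ → ¬ G.dirD T₁ T₂)

/-- `pre(T)`: the union of all the chain components `T'` with `T ≺ T'`
(the predecessors, i.e. the past, of `T`). -/
noncomputable def pre (ord : Finset V → Finset V → Prop) (T : Finset V) :
    Finset V :=
  Finset.univ.filter fun w => ord T (G.component w)

end MixedGraph

/-- A cell of the joint contingency table: variable `v` takes one of the
levels `0, …, r v - 1` (level `0` playing the role of the first level `1`). -/
abbrev Cell {V : Type*} (r : V → ℕ) := ∀ v : V, Fin (r v)

variable {V : Type*} [Fintype V] [DecidableEq V] {r : V → ℕ}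

/-- The marginal probability `p_S(i_S)` (as a function of a full cell `i`,
depending on it only through the coordinates in `S`). -/
noncomputable def marginal (p : Cell r → ℝ) (S : Finset V) (i : Cell r) : ℝ :=
  ∑ j : Cell r, if ∀ v ∈ S, j v = i v then p j else 0

/-- The conditional probability `p_{A|B}(i_A | i_B)`. -/
noncomputable def condProb (p : Cell r → ℝ) (A B : Finset V) (i : Cell r) : ℝ :=
  marginal p (A ∪ B) i / marginal p B i

/-- `p` is a strictly positive joint probability mass function. -/
def IsPosPMF (p : Cell r → ℝ) : Prop :=
  (∀ i, 0 < p i) ∧ ∑ i : Cell r, p i = 1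

/-- Conditional independence `A ⊥ B | C`. -/
def CondIndep (p : Cell r → ℝ) (A B C : Finset V) : Prop :=
  ∀ i : Cell r,
    marginal p (A ∪ B ∪ C) i * marginal p C i =
      marginal p (A ∪ C) i * marginal p (B ∪ C) i

/-- The cell agreeing with `i` on `S` and equal to the first (reference)
level outside `S`. -/
def splice (hr : ∀ v, 2 ≤ r v) (S : Finset V) (i : Cell r) : Cell r :=
  fun v => if v ∈ S then i v else ⟨0, by have := hr v; omega⟩

/-- The conditional multivariate logistic contrast
`η^{(A)}(i_A | i_B) = Σ_{s ⊆ A} (−1)^{|A∖s|} log p_{A|B}((i_s, 1_{A∖s}) | i_B)`. -/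
noncomputable def mlContrast (hr : ∀ v, 2 ≤ r v) (p : Cell r → ℝ)
    (A B : Finset V) (i : Cell r) : ℝ :=
  ∑ s ∈ A.powerset,
    (-1 : ℝ) ^ (A \ s).card * Real.log (condProb p A B (splice hr (s ∪ B) i))

/-- The multivariate regression (MR) Markov property for the chain graph `G`
with respect to the consistent ordering `ord`: for every chain component `T`
and every nonempty `A ⊆ T`, (MR1) if `A` is connected then
`A ⊥ (pre(T)∖pa_G(A)) | pa_G(A)`, and (MR2) if `A` is disconnected then its
connected components are mutually independent given `pre(T)`. -/
def MRMarkov (G : MixedGraph V) (ord : Finset V → Finset V → Prop)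
    (p : Cell r → ℝ) : Prop :=
  ∀ T : Finset V, G.IsComponent T → ∀ A ⊆ T, A.Nonempty →
    (G.ConnectedIn A →
      CondIndep p A (G.pre ord T \ G.paG A) (G.paG A)) ∧
    (¬ G.ConnectedIn A →
      ∀ i : Cell r,
        condProb p A (G.pre ord T) i =
          ∏ Aj ∈ G.connComps A, condProb p Aj (G.pre ord T) i)

/-- The block-recursive Markov property of type IV for the chain graph `G`:
(IV0) `T ⊥ (nd_D(T)∖pa_D(T)) | pa_D(T)`;
(IV1) `A ⊥ (pa_D(T)∖pa_G(A)) | pa_G(A)` for all `A ⊆ T`;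
(IV2) `A ⊥ (T∖Nb_G(A)) | pa_D(T)` for all connected `A ⊆ T`. -/
def TypeIVMarkov (G : MixedGraph V) (p : Cell r → ℝ) : Prop :=
  (∀ T : Finset V, G.IsComponent T →
      CondIndep p T (G.ndD T \ G.paD T) (G.paD T)) ∧
  (∀ T : Finset V, G.IsComponent T → ∀ A ⊆ T,
      CondIndep p A (G.paD T \ G.paG A) (G.paG A)) ∧
  (∀ T : Finset V, G.IsComponent T → ∀ A ⊆ T, G.ConnectedIn A →
      CondIndep p A (T \ G.nbG A) (G.paD T))


set_option linter.unusedSectionVars false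

section Helpers

theorem marg_congr (p : Cell r → ℝ) (S : Finset V) {i j : Cell r}
    (h : ∀ v ∈ S, i v = j v) : marginal p S i = marginal p S j := by
  unfold marginal
  refine Finset.sum_congr rfl fun k _ => ?_
  have : (∀ v ∈ S, k v = i v) ↔ (∀ v ∈ S, k v = j v) :=
    ⟨fun H v hv => (H v hv).trans (h v hv), fun H v hv => (H v hv).trans (h v hv).symm⟩
  simp only [this]

theorem marg_pos {p : Cell r → ℝ} (hp : ∀ i, 0 < p i) (S : Finset V) (i : Cell r) :
    0 < marginal p S i := by
  unfold marginal
  refine Finset.sum_pos' (fun k _ => ?_) ⟨i, Finset.mem_univ _, ?_⟩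
  · split_ifs
    · exact (hp k).le
    · exact le_rfl
  · simpa using hp i

theorem marg_sum (p : Cell r → ℝ) {S : Finset V} {v : V} (hv : v ∈ S) (j : Cell r) :
    ∑ x : Fin (r v), marginal p S (Function.update j v x) = marginal p (S.erase v) j := by
  unfold marginal
  rw [Finset.sum_comm]
  refine Finset.sum_congr rfl fun k _ => ?_
  have key : ∀ x : Fin (r v), (∀ w ∈ S, k w = Function.update j v x w) ↔
      (x = k v ∧ ∀ w ∈ S.erase v, k w = j w) := by
    intro x
    constructor
    · intro H
      refine ⟨by simpa using (H v hv).symm, fun w hw => ?_⟩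
      have := H w (Finset.mem_of_mem_erase hw)
      rwa [Function.update_of_ne (Finset.ne_of_mem_erase hw)] at this
    · rintro ⟨rfl, H⟩ w hw
      by_cases hwv : w = v
      · subst hwv; simp
      · rw [Function.update_of_ne hwv]; exact H w (Finset.mem_erase.2 ⟨hwv, hw⟩)
  simp only [key]
  by_cases H : ∀ w ∈ S.erase v, k w = j w
  · rw [if_pos H]
    rw [Finset.sum_eq_single (k v)]
    · rw [if_pos ⟨rfl, H⟩]
    · intro x _ hx; rw [if_neg]; rintro ⟨h, _⟩; exact hx h
    · simp
  · rw [if_neg H]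
    refine Finset.sum_eq_zero fun x _ => ?_
    rw [if_neg]; rintro ⟨_, h⟩; exact H h

theorem marg_update (p : Cell r → ℝ) {S : Finset V} {v : V} (hv : v ∉ S) (j : Cell r)
    (x : Fin (r v)) : marginal p S (Function.update j v x) = marginal p S j := by
  apply marg_congr
  intro w hw
  rw [Function.update_of_ne]
  rintro rfl; exact hv hw

theorem marg_univ (p : Cell r → ℝ) (i : Cell r) : marginal p Finset.univ i = p i := by
  unfold marginal
  rw [Finset.sum_eq_single i]
  · simp
  · intro k _ hk
    rw [if_neg]
    intro h; exact hk (funext fun v => h v (Finset.mem_univ v))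
  · simp

theorem marg_empty {p : Cell r → ℝ} (hp : IsPosPMF p) (i : Cell r) : marginal p ∅ i = 1 := by
  unfold marginal
  simpa using hp.2

/-- Summing out the coordinates of `D`. -/
theorem marg_sum_out (p : Cell r → ℝ) (X X' : Finset V) (K K' : Cell r → ℝ) (D : Finset V)
    (hX : Disjoint D X) (hX' : Disjoint D X')
    (hK : ∀ v ∈ D, ∀ j x, K (Function.update j v x) = K j)
    (hK' : ∀ v ∈ D, ∀ j x, K' (Function.update j v x) = K' j)
    (H : ∀ j, marginal p (X ∪ D) j * K j = marginal p (X' ∪ D) j * K' j) :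
    ∀ j, marginal p X j * K j = marginal p X' j * K' j := by
  induction D using Finset.induction_on with
  | empty => simpa using H
  | insert v D hv ih =>
    rw [Finset.disjoint_insert_left] at hX hX'
    refine ih hX.2 hX'.2 (fun w hw => hK w (Finset.mem_insert_of_mem hw))
      (fun w hw => hK' w (Finset.mem_insert_of_mem hw)) ?_
    intro j
    have e1 : X ∪ D = (X ∪ insert v D).erase v := by
      ext w; by_cases hw : w = v
      · subst hw; simp [hX.1, hv]
      · simp [hw]
    have e2 : X' ∪ D = (X' ∪ insert v D).erase v := by
      ext w; by_cases hw : w = v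
      · subst hw; simp [hX'.1, hv]
      · simp [hw]
    rw [e1, e2, ← marg_sum p (by simp), ← marg_sum p (by simp), Finset.sum_mul, Finset.sum_mul]
    refine Finset.sum_congr rfl fun x _ => ?_
    rw [← hK v (Finset.mem_insert_self _ _) j x, ← hK' v (Finset.mem_insert_self _ _) j x]
    exact H _

theorem sum_update (v : V) (E : Cell r → ℝ) :
    ∑ j : Cell r, ∑ x : Fin (r v), E (Function.update j v x) = (r v : ℝ) * ∑ j, E j := by
  have h1 : ∑ j : Cell r, ∑ x : Fin (r v), E (Function.update j v x)
      = ∑ q : Cell r × Fin (r v), E (Function.update q.1 v q.2) := by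
    rw [Fintype.sum_prod_type]
  have h2 : ∑ q : Cell r × Fin (r v), E (Function.update q.1 v q.2)
      = ∑ q : Cell r × Fin (r v), E q.1 := by
    refine Finset.sum_nbij' (fun q => (Function.update q.1 v q.2, q.1 v))
      (fun q => (Function.update q.1 v q.2, q.1 v)) ?_ ?_ ?_ ?_ ?_ <;> simp
  rw [h1, h2, Fintype.sum_prod_type]
  simp [Finset.mul_sum]

theorem sum_mul_zero (hr : ∀ v, 2 ≤ r v) (v : V) (D h : Cell r → ℝ)
    (hD : ∀ j, ∑ x : Fin (r v), D (Function.update j v x) = 0)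
    (hh : ∀ j x, h (Function.update j v x) = h j) : ∑ j, D j * h j = 0 := by
  have := sum_update v (fun j => D j * h j)
  simp only [hh, ← Finset.sum_mul, hD, zero_mul, Finset.sum_const_zero] at this
  have h2 : (r v : ℝ) ≠ 0 := by
    have := hr v
    have : r v ≠ 0 := by omega
    exact_mod_cast this
  rcases mul_eq_zero.1 this.symm with h | h
  · exact absurd h h2
  · exact h

theorem alt_zero {S : Finset V} {v : V} (hv : v ∈ S) (f : Finset V → ℝ)
    (hf : ∀ s ⊆ S.erase v, f (insert v s) = f s) :
    ∑ s ∈ S.powerset, (-1 : ℝ) ^ (S \ s).card * f s = 0 := by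
  conv_lhs => rw [← Finset.insert_erase hv]
  rw [Finset.sum_powerset_insert (Finset.notMem_erase v S), ← Finset.sum_add_distrib]
  refine Finset.sum_eq_zero fun s hs => ?_
  have hs' := Finset.mem_powerset.1 hs
  have hvs : v ∉ s := fun h => Finset.notMem_erase v S (hs' h)
  rw [hf s hs']
  have e1 : insert v (S.erase v) \ s = insert v (S.erase v \ s) := by
    rw [Finset.insert_sdiff_of_notMem _ hvs]
  have e2 : insert v (S.erase v) \ insert v s = S.erase v \ s := by
    ext w; by_cases hw : w = v
    · subst hw; simp
    · simp [hw]
  rw [e1, e2, Finset.card_insert_of_notMem (by simp), pow_succ]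
  ring

theorem splice_of_mem (hr : ∀ v, 2 ≤ r v) {S : Finset V} {v : V} (h : v ∈ S) (i : Cell r) :
    splice hr S i v = i v := by simp [splice, h]

theorem splice_of_notMem (hr : ∀ v, 2 ≤ r v) {S : Finset V} {v : V} (h : v ∉ S) (i : Cell r) :
    splice hr S i v = ⟨0, by have := hr v; omega⟩ := by simp [splice, h]

theorem splice_congr (hr : ∀ v, 2 ≤ r v) {S : Finset V} {i j : Cell r}
    (h : ∀ v ∈ S, i v = j v) : splice hr S i = splice hr S j := by
  funext v
  by_cases hv : v ∈ S <;> simp [splice, hv]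
  exact h v hv

/-- Uniqueness: equal margins and equal highest order interaction force equality. -/
theorem key_uniq (hr : ∀ v, 2 ≤ r v) (F G : Cell r → ℝ) (hF : ∀ j, 0 < F j) (hG : ∀ j, 0 < G j)
    (S : Finset V)
    (hsum : ∀ v ∈ S, ∀ j, ∑ x : Fin (r v), F (Function.update j v x)
      = ∑ x : Fin (r v), G (Function.update j v x))
    (halt : ∀ j : Cell r, (∀ v ∈ S, (j v : ℕ) ≠ 0) →
      ∑ s ∈ S.powerset, (-1 : ℝ) ^ (S \ s).card *
        (Real.log (F (splice hr (s ∪ Sᶜ) j)) - Real.log (G (splice hr (s ∪ Sᶜ) j))) = 0) :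
    ∀ j, F j = G j := by
  set L : Cell r → ℝ := fun j => Real.log (F j) - Real.log (G j) with hL
  have halt' : ∀ j : Cell r, ∑ s ∈ S.powerset, (-1 : ℝ) ^ (S \ s).card *
      L (splice hr (s ∪ Sᶜ) j) = 0 := by
    intro j
    by_cases h : ∀ v ∈ S, (j v : ℕ) ≠ 0
    · exact halt j h
    · push Not at h
      obtain ⟨v, hv, hv0⟩ := h
      refine alt_zero hv (fun s => L (splice hr (s ∪ Sᶜ) j)) fun s hs => ?_
      congr 1
      funext w
      by_cases hw : w = v
      · subst hw
        rw [splice_of_mem hr (by simp), splice_of_notMem hr]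
        · exact Fin.ext hv0
        · have : w ∉ s := fun h => Finset.notMem_erase w S (hs h)
          simp [this, hv]
      · simp [splice, hw]
  have hrep : ∀ j, L j = - ∑ s ∈ S.powerset.erase S, (-1 : ℝ) ^ (S \ s).card *
      L (splice hr (s ∪ Sᶜ) j) := by
    intro j
    have h1 := halt' j
    rw [← Finset.add_sum_erase _ _ (Finset.mem_powerset_self S)] at h1
    have h2 : splice hr (S ∪ Sᶜ) j = j := by
      funext w; simp [splice]
    rw [h2, Finset.sdiff_self, Finset.card_empty, pow_zero, one_mul] at h1
    linarith
  have horth : ∑ j, (F j - G j) * L j = 0 := by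
    have : ∀ j, (F j - G j) * L j = - ∑ s ∈ S.powerset.erase S, (-1 : ℝ) ^ (S \ s).card *
        ((F j - G j) * L (splice hr (s ∪ Sᶜ) j)) := by
      intro j
      conv_lhs => rw [hrep j]
      rw [mul_neg, Finset.mul_sum]
      congr 1
      refine Finset.sum_congr rfl fun s _ => by ring
    simp only [this]
    rw [Finset.sum_neg_distrib, Finset.sum_comm, neg_eq_zero]
    refine Finset.sum_eq_zero fun s hs => ?_
    rw [← Finset.mul_sum]
    rw [Finset.mem_erase, Finset.mem_powerset] at hs
    obtain ⟨v, hvS, hvs⟩ := Finset.exists_of_ssubset (Finset.ssubset_iff_subset_ne.2 ⟨hs.2, hs.1⟩)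
    rw [sum_mul_zero hr v (fun j => F j - G j) (fun j => L (splice hr (s ∪ Sᶜ) j)), mul_zero]
    · intro j
      rw [Finset.sum_sub_distrib, hsum v hvS, sub_self]
    · intro j x
      congr 1
      apply splice_congr
      intro w hw
      rw [Function.update_of_ne]
      rintro rfl
      simp [hvs, hvS] at hw
  have hnn : ∀ j, 0 ≤ (F j - G j) * L j := by
    intro j
    rcases le_total (F j) (G j) with h | h
    · have := Real.log_le_log (hF j) h
      exact mul_nonneg_of_nonpos_of_nonpos (by linarith) (by simp only [hL]; linarith)
    · have := Real.log_le_log (hG j) h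
      exact mul_nonneg (by linarith) (by simp only [hL]; linarith)
  intro j
  have := (Finset.sum_eq_zero_iff_of_nonneg (fun j _ => hnn j)).1 horth j (Finset.mem_univ j)
  rcases mul_eq_zero.1 this with h | h
  · linarith
  · exact Real.log_injOn_pos (hF j) (hG j) (by simp only [hL] at h; linarith)

theorem condProb_pos {p : Cell r → ℝ} (hp : ∀ i, 0 < p i) (A B : Finset V) (i : Cell r) :
    0 < condProb p A B i := div_pos (marg_pos hp _ _) (marg_pos hp _ _)

theorem condProb_congr (p : Cell r → ℝ) (A B : Finset V) {i j : Cell r}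
    (h : ∀ v ∈ A ∪ B, i v = j v) : condProb p A B i = condProb p A B j := by
  unfold condProb
  rw [marg_congr p _ h, marg_congr p B fun v hv => h v (Finset.mem_union_right _ hv)]

theorem condProb_update (p : Cell r → ℝ) {A B : Finset V} {v : V} (hA : v ∉ A) (hB : v ∉ B)
    (j : Cell r) (x : Fin (r v)) :
    condProb p A B (Function.update j v x) = condProb p A B j := by
  unfold condProb
  rw [marg_update p (by simp [hA, hB]), marg_update p hB]

theorem condProb_sum (p : Cell r → ℝ) {S B : Finset V} {v : V} (hv : v ∈ S) (hB : v ∉ B)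
    (j : Cell r) :
    ∑ x : Fin (r v), condProb p S B (Function.update j v x) = condProb p (S.erase v) B j := by
  unfold condProb
  simp only [marg_update p hB]
  rw [← Finset.sum_div, marg_sum p (Finset.mem_union_left _ hv), Finset.erase_union_distrib,
    Finset.erase_eq_of_notMem hB]

theorem ci_of_dep {p : Cell r → ℝ} (hp : ∀ i, 0 < p i) {A B P : Finset V} (hPB : P ⊆ B)
    (hAB : Disjoint A B)
    (h : ∀ j j' : Cell r, (∀ v ∈ A ∪ P, j v = j' v) → condProb p A B j = condProb p A B j') :
    CondIndep p A (B \ P) P := by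
  have e1 : P ∪ B \ P = B := Finset.union_sdiff_of_subset hPB
  have e2 : A ∪ P ∪ B \ P = A ∪ B := by rw [Finset.union_assoc, e1]
  have e3 : A ∪ B \ P ∪ P = A ∪ B := by rw [Finset.union_assoc, Finset.union_comm _ P, e1]
  have main := marg_sum_out p (A ∪ P) P (fun _ => 1) (fun j => condProb p A B j) (B \ P)
    (by
      rw [Finset.disjoint_union_right]
      exact ⟨(hAB.mono_right Finset.sdiff_subset).symm, Finset.sdiff_disjoint⟩)
    Finset.sdiff_disjoint (fun _ _ _ _ => rfl)
    (fun v hv j x => by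
      refine h _ _ fun w hw => ?_
      rw [Function.update_of_ne]
      rintro rfl
      rw [Finset.mem_sdiff] at hv
      rcases Finset.mem_union.1 hw with hw | hw
      · exact Finset.disjoint_left.1 hAB hw hv.1
      · exact hv.2 hw)
    (fun j => by
      rw [e1, e2]
      unfold condProb
      have := (marg_pos hp B j).ne'
      field_simp)
  intro j
  have m := main j
  rw [e3, Finset.union_comm (B \ P) P, e1]
  simp only [mul_one] at m
  rw [m]
  unfold condProb
  have := (marg_pos hp B j).ne'
  field_simp

theorem dep_of_ci {p : Cell r → ℝ} (hp : ∀ i, 0 < p i) {A B P : Finset V} (hPB : P ⊆ B)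
    (h : CondIndep p A (B \ P) P) (j j' : Cell r) (hj : ∀ v ∈ A ∪ P, j v = j' v) :
    condProb p A B j = condProb p A B j' := by
  have e1 : P ∪ B \ P = B := Finset.union_sdiff_of_subset hPB
  have e3 : A ∪ B \ P ∪ P = A ∪ B := by rw [Finset.union_assoc, Finset.union_comm _ P, e1]
  have key : ∀ i, condProb p A B i = condProb p A P i := by
    intro i
    have := h i
    rw [e3, Finset.union_comm (B \ P) P, e1] at this
    unfold condProb
    rw [div_eq_div_iff (marg_pos hp B i).ne' (marg_pos hp P i).ne', this]
  rw [key, key]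
  exact condProb_congr p A P hj

theorem ci_mono {p : Cell r → ℝ} {A B C C' : Finset V}
    (h : CondIndep p A C B) (hC : C' ⊆ C) (hA : Disjoint A C) (hB : Disjoint C B) :
    CondIndep p A C' B := by
  have hD : ∀ v ∈ C \ C', v ∉ A ∧ v ∉ B := fun v hv =>
    ⟨fun h => Finset.disjoint_left.1 hA h (Finset.mem_sdiff.1 hv).1,
      fun h => Finset.disjoint_left.1 hB (Finset.mem_sdiff.1 hv).1 h⟩
  have hD' : ∀ v ∈ C \ C', v ∉ C' := fun v hv => (Finset.mem_sdiff.1 hv).2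
  have e1 : A ∪ C' ∪ B ∪ C \ C' = A ∪ C ∪ B := by
    ext v; have := @hC v; simp only [Finset.mem_union, Finset.mem_sdiff]; tauto
  have e2 : C' ∪ B ∪ C \ C' = C ∪ B := by
    ext v; have := @hC v; simp only [Finset.mem_union, Finset.mem_sdiff]; tauto
  have := marg_sum_out p (A ∪ C' ∪ B) (C' ∪ B) (marginal p B) (marginal p (A ∪ B)) (C \ C')
    (by
      rw [Finset.disjoint_left]; intro v hv
      have := hD v hv; have := hD' v hv
      simp only [Finset.mem_union]; tauto)
    (by
      rw [Finset.disjoint_left]; intro v hv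
      have := hD v hv; have := hD' v hv
      simp only [Finset.mem_union]; tauto)
    (fun v hv j x => marg_update p (hD v hv).2 j x)
    (fun v hv j x => marg_update p (by
      have := hD v hv; simp only [Finset.mem_union]; tauto) j x)
    (fun j => by rw [e1, e2, h j, mul_comm])
  intro j
  rw [this j, mul_comm]

theorem splice_insert_ne (hr : ∀ v, 2 ≤ r v) {v w : V} (hw : w ≠ v) (s W : Finset V)
    (i : Cell r) : splice hr (insert v s ∪ W) i w = splice hr (s ∪ W) i w := by
  simp [splice, hw]

theorem alt_condProb_zero (hr : ∀ v, 2 ≤ r v) (p : Cell r → ℝ) {S A B : Finset V} {v : V}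
    (hv : v ∈ S) (hA : v ∉ A) (hB : v ∉ B) (W : Finset V) (i : Cell r) :
    ∑ s ∈ S.powerset, (-1 : ℝ) ^ (S \ s).card *
      Real.log (condProb p A B (splice hr (s ∪ W) i)) = 0 := by
  refine alt_zero hv _ fun s _ => ?_
  congr 1
  refine condProb_congr p A B fun w hw => splice_insert_ne hr ?_ _ _ _
  rintro rfl
  rcases Finset.mem_union.1 hw with h | h
  · exact hA h
  · exact hB h

theorem contrast_zero_of_ci (hr : ∀ v, 2 ≤ r v) {p : Cell r → ℝ} (hp : ∀ i, 0 < p i)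
    {A B C : Finset V} (h : CondIndep p A C B) (hA : A.Nonempty) (hC : C.Nonempty)
    (hAC : Disjoint A C) (hAB : Disjoint A B) (hCB : Disjoint C B) (i : Cell r) :
    mlContrast hr p (A ∪ C) B i = 0 := by
  obtain ⟨a, ha⟩ := hA
  obtain ⟨c, hc⟩ := hC
  have key : ∀ j, Real.log (condProb p (A ∪ C) B j)
      = Real.log (condProb p A B j) + Real.log (condProb p C B j) := by
    intro j
    rw [← Real.log_mul (condProb_pos hp _ _ _).ne' (condProb_pos hp _ _ _).ne']
    congr 1
    have := h j
    unfold condProb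
    have hb := (marg_pos hp B j).ne'
    field_simp
    linarith
  unfold mlContrast
  simp only [key, mul_add, Finset.sum_add_distrib]
  rw [alt_condProb_zero hr p (v := c) (by simp [hc]) (fun h => Finset.disjoint_left.1 hAC h hc)
      (fun h => Finset.disjoint_left.1 hCB hc h),
    alt_condProb_zero hr p (v := a) (by simp [ha]) (fun h => Finset.disjoint_left.1 hAC ha h)
      (fun h => Finset.disjoint_left.1 hAB ha h), add_zero]

theorem mlContrast_eq (hr : ∀ v, 2 ≤ r v) (p : Cell r → ℝ) {S B : Finset V}
    (hSB : Disjoint S B) (i : Cell r) :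
    mlContrast hr p S B i = ∑ s ∈ S.powerset, (-1 : ℝ) ^ (S \ s).card *
      Real.log (condProb p S B (splice hr (s ∪ Sᶜ) i)) := by
  unfold mlContrast
  refine Finset.sum_congr rfl fun s hs => ?_
  congr 2
  refine condProb_congr p S B fun w hw => ?_
  have h1 : w ∈ s → w ∈ S := fun h => Finset.mem_powerset.1 hs h
  have h2 : w ∈ S → w ∉ B := fun h => Finset.disjoint_left.1 hSB h
  have : w ∈ s ∪ B ↔ w ∈ s ∪ Sᶜ := by
    simp only [Finset.mem_union, Finset.mem_compl] at hw ⊢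
    tauto
  simp only [splice, this]

theorem ci_of_contrast (hr : ∀ v, 2 ≤ r v) {p : Cell r → ℝ} (hp : ∀ i, 0 < p i)
    {T B : Finset V} (hTB : Disjoint T B) (N : V → V → Prop)
    (hc : ∀ A C : Finset V, A ⊆ T → C ⊆ T → A.Nonempty → C.Nonempty → Disjoint A C →
      (∀ a ∈ A, ∀ c ∈ C, N a c) → ∀ i : Cell r, (∀ v ∈ A ∪ C, (i v : ℕ) ≠ 0) →
        mlContrast hr p (A ∪ C) B i = 0) (n : ℕ) :
    ∀ A C : Finset V, A.card + C.card = n → A ⊆ T → C ⊆ T → Disjoint A C →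
      (∀ a ∈ A, ∀ c ∈ C, N a c) → CondIndep p A C B := by
  induction n with
  | zero =>
    intro A C hn _ _ _ _ j
    have : A = ∅ := by rw [← Finset.card_eq_zero]; omega
    subst this
    simp [mul_comm]
  | succ n ih =>
    intro A C hn hA hC hAC hN
    rcases A.eq_empty_or_nonempty with rfl | hAne
    · intro j; simp [mul_comm]
    rcases C.eq_empty_or_nonempty with rfl | hCne
    · intro j; simp
    have hAB : Disjoint A B := hTB.mono_left hA
    have hCB : Disjoint C B := hTB.mono_left hC
    unfold CondIndep
    refine key_uniq hr (fun j => marginal p (A ∪ C ∪ B) j * marginal p B j)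
      (fun j => marginal p (A ∪ B) j * marginal p (C ∪ B) j)
      (fun j => mul_pos (marg_pos hp _ _) (marg_pos hp _ _))
      (fun j => mul_pos (marg_pos hp _ _) (marg_pos hp _ _)) (A ∪ C) ?_ ?_
    · intro v hv j
      rcases Finset.mem_union.1 hv with hv | hv
      · have hvB : v ∉ B := Finset.disjoint_left.1 hAB hv
        have hvC : v ∉ C := Finset.disjoint_left.1 hAC hv
        have hvCB : v ∉ C ∪ B := by simp [hvB, hvC]
        have := ih (A.erase v) C (by
            have := Finset.card_pos.2 ⟨v, hv⟩
            rw [Finset.card_erase_of_mem hv]; omega)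
          ((Finset.erase_subset _ _).trans hA) hC (hAC.mono_left (Finset.erase_subset _ _))
          (fun a ha => hN a (Finset.mem_of_mem_erase ha)) j
        simp only [marg_update p hvB, marg_update p hvCB]
        rw [← Finset.sum_mul, ← Finset.sum_mul, marg_sum p (by simp [hv]),
          marg_sum p (by simp [hv])]
        simp only [Finset.erase_union_distrib, Finset.erase_eq_of_notMem hvB,
          Finset.erase_eq_of_notMem hvC]
        exact this
      · have hvB : v ∉ B := Finset.disjoint_left.1 hCB hv
        have hvA : v ∉ A := fun h => Finset.disjoint_left.1 hAC h hv
        have hvAB : v ∉ A ∪ B := by simp [hvB, hvA]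
        have := ih A (C.erase v) (by
            have := Finset.card_pos.2 ⟨v, hv⟩
            rw [Finset.card_erase_of_mem hv]; omega)
          hA ((Finset.erase_subset _ _).trans hC) (hAC.mono_right (Finset.erase_subset _ _))
          (fun a ha c hc => hN a ha c (Finset.mem_of_mem_erase hc)) j
        simp only [marg_update p hvB, marg_update p hvAB]
        rw [← Finset.sum_mul, ← Finset.mul_sum, marg_sum p (by simp [hv]),
          marg_sum p (by simp [hv])]
        simp only [Finset.erase_union_distrib, Finset.erase_eq_of_notMem hvB,
          Finset.erase_eq_of_notMem hvA]
        exact this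
    · intro j hj
      have h0 := hc A C hA hC hAne hCne hAC hN j hj
      rw [mlContrast_eq hr p (Finset.disjoint_union_left.2 ⟨hAB, hCB⟩)] at h0
      obtain ⟨a, ha⟩ := hAne
      obtain ⟨c, hc'⟩ := hCne
      have hA0 := alt_condProb_zero hr p (S := A ∪ C) (A := A) (B := B) (v := c) (by simp [hc'])
        (fun h => Finset.disjoint_left.1 hAC h hc')
        (fun h => Finset.disjoint_left.1 hCB hc' h) (A ∪ C)ᶜ j
      have hC0 := alt_condProb_zero hr p (S := A ∪ C) (A := C) (B := B) (v := a) (by simp [ha])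
        (fun h => Finset.disjoint_left.1 hAC ha h)
        (fun h => Finset.disjoint_left.1 hAB ha h) (A ∪ C)ᶜ j
      have key : ∀ x, Real.log (marginal p (A ∪ C ∪ B) x * marginal p B x)
          - Real.log (marginal p (A ∪ B) x * marginal p (C ∪ B) x)
          = Real.log (condProb p (A ∪ C) B x) - Real.log (condProb p A B x)
            - Real.log (condProb p C B x) := by
        intro x
        unfold condProb
        have m := fun S => (marg_pos hp S x).ne'
        rw [Real.log_mul (m _) (m _), Real.log_mul (m _) (m _), Real.log_div (m _) (m _),
          Real.log_div (m _) (m _), Real.log_div (m _) (m _)]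
        ring
      simp only [key, mul_sub, Finset.sum_sub_distrib]
      rw [h0, hA0, hC0]; simp

theorem dep_of_contrast (hr : ∀ v, 2 ≤ r v) {p : Cell r → ℝ} (hp : ∀ i, 0 < p i)
    {T B : Finset V} (hTB : Disjoint T B) (PA : Finset V → Finset V)
    (hPA : ∀ S ⊆ T, ∀ v ∈ S, PA (S.erase v) ⊆ PA S)
    (hc : ∀ S ⊆ T, S.Nonempty → ∀ j : Cell r, (∀ v ∈ S, (j v : ℕ) ≠ 0) →
      mlContrast hr p S B j = mlContrast hr p S B (splice hr (S ∪ PA S) j)) (n : ℕ) :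
    ∀ S ⊆ T, S.card = n → ∀ j j' : Cell r, (∀ v ∈ S ∪ PA S, j v = j' v) →
      condProb p S B j = condProb p S B j' := by
  induction n with
  | zero =>
    intro S _ hS j j' _
    rw [Finset.card_eq_zero] at hS
    subst hS
    unfold condProb
    rw [Finset.empty_union, div_self (marg_pos hp _ _).ne', div_self (marg_pos hp _ _).ne']
  | succ n ih =>
    intro S hS hn
    have hSB : Disjoint S B := hTB.mono_left hS
    have hne : S.Nonempty := by rw [← Finset.card_pos]; omega
    have main : ∀ j, condProb p S B j = condProb p S B (splice hr (S ∪ PA S) j) := by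
      refine key_uniq hr (fun j => condProb p S B j)
        (fun j => condProb p S B (splice hr (S ∪ PA S) j))
        (fun j => condProb_pos hp _ _ _) (fun j => condProb_pos hp _ _ _) S ?_ ?_
      · intro v hv j
        have hvB : v ∉ B := Finset.disjoint_left.1 hSB hv
        have e : ∀ x, splice hr (S ∪ PA S) (Function.update j v x)
            = Function.update (splice hr (S ∪ PA S) j) v x := by
          intro x
          funext w
          by_cases hw : w = v
          · subst hw; simp [splice, hv]
          · simp [splice, hw]
        simp only [e]
        rw [condProb_sum p hv hvB, condProb_sum p hv hvB]
        refine ih (S.erase v) ((Finset.erase_subset _ _).trans hS)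
          (by rw [Finset.card_erase_of_mem hv]; omega) _ _ fun w hw => ?_
        rw [splice_of_mem]
        rcases Finset.mem_union.1 hw with h | h
        · exact Finset.mem_union_left _ (Finset.mem_of_mem_erase h)
        · exact Finset.mem_union_right _ (hPA S hS v hv h)
      · intro j hj
        have h0 := hc S hS hne j hj
        rw [mlContrast_eq hr p hSB, mlContrast_eq hr p hSB] at h0
        simp only [mul_sub, Finset.sum_sub_distrib]
        rw [h0, sub_eq_zero]
        refine Finset.sum_congr rfl fun s hs => ?_
        congr 3
        funext w
        simp only [splice]
        split_ifs <;> rfl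
    intro j j' h
    rw [main j, main j', splice_congr hr h]

theorem moebius (P : Finset V) : ∀ g : Finset V → ℝ,
    ∑ b ∈ P.powerset, ∑ c ∈ b.powerset, (-1 : ℝ) ^ (b \ c).card * g c = g P := by
  induction P using Finset.induction_on with
  | empty => intro g; simp
  | insert v P hv ih =>
    intro g
    rw [Finset.sum_powerset_insert hv, ih g, ← ih (fun c => g (insert v c)), ← ih g,
      ← Finset.sum_add_distrib]
    refine Finset.sum_congr rfl fun b hb => ?_
    have hvb : v ∉ b := fun h => hv (Finset.mem_powerset.1 hb h)
    rw [Finset.sum_powerset_insert hvb, ← add_assoc, ← Finset.sum_add_distrib]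
    have : ∀ c ∈ b.powerset, (-1 : ℝ) ^ (b \ c).card * g c
        + (-1 : ℝ) ^ (insert v b \ c).card * g c = 0 := by
      intro c hc
      have hvc : v ∉ c := fun h => hvb (Finset.mem_powerset.1 hc h)
      rw [Finset.insert_sdiff_of_notMem _ hvc, Finset.card_insert_of_notMem (by simp [hvb]),
        pow_succ]
      ring
    rw [Finset.sum_eq_zero this, zero_add]
    refine Finset.sum_congr rfl fun c hc => ?_
    have e2 : insert v b \ insert v c = b \ c := by
      ext w; by_cases hw : w = v
      · subst hw; simp [hvb]
      · simp [hw]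
    rw [e2]

theorem exists_beta (hr : ∀ v, 2 ≤ r v) (A P : Finset V) (f : Cell r → ℝ)
    (hf : ∀ i j : Cell r, (∀ v ∈ A ∪ P, i v = j v) → f i = f j) :
    ∃ beta : Finset V → Cell r → ℝ,
      (∀ b, ∀ i j : Cell r, (∀ v ∈ A ∪ b, i v = j v) → beta b i = beta b j) ∧
      (∀ b, ∀ i : Cell r, (∃ v ∈ b, (i v : ℕ) = 0) → beta b i = 0) ∧
      (∀ i : Cell r, f i = ∑ b ∈ P.powerset, beta b i) := by
  refine ⟨fun b i => ∑ c ∈ b.powerset, (-1 : ℝ) ^ (b \ c).card * f (splice hr (A ∪ c) i),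
    ?_, ?_, ?_⟩
  · intro b i j h
    refine Finset.sum_congr rfl fun c hc => ?_
    rw [splice_congr hr fun v hv => h v ?_]
    exact Finset.union_subset_union_right (Finset.mem_powerset.1 hc) hv
  · rintro b i ⟨v, hv, h0⟩
    refine alt_zero hv _ fun s _ => ?_
    congr 1
    funext w
    by_cases hw : w = v
    · subst hw
      have : i w = ⟨0, by have := hr w; omega⟩ := Fin.ext h0
      simp [splice, this]
    · simp [splice, hw]
  · intro i
    rw [moebius P (fun c => f (splice hr (A ∪ c) i))]
    exact hf _ _ fun v hv => (splice_of_mem hr hv i).symm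

theorem mlContrast_dep (hr : ∀ v, 2 ≤ r v) (p : Cell r → ℝ) {A B P : Finset V}
    (h : ∀ j j' : Cell r, (∀ v ∈ A ∪ P, j v = j' v) → condProb p A B j = condProb p A B j')
    (i j : Cell r) (hij : ∀ v ∈ A ∪ P, i v = j v) :
    mlContrast hr p A B i = mlContrast hr p A B j := by
  unfold mlContrast
  refine Finset.sum_congr rfl fun s _ => ?_
  congr 2
  refine h _ _ fun v hv => ?_
  simp only [splice, hij v hv]

namespace MixedGraph

variable (G : MixedGraph V)

theorem mem_component {v w : V} : w ∈ G.component v ↔ G.sameComp v w := by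
  simp [component]

theorem sameComp_symm {v w : V} (h : G.sameComp v w) : G.sameComp w v := by
  unfold sameComp at *
  induction h with
  | refl => exact .refl
  | tail _ hbc ih => exact .head (G.undir_symm hbc) ih

theorem self_mem_component (v : V) : v ∈ G.component v :=
  G.mem_component.2 .refl

theorem component_eq_of_mem {v w : V} (h : w ∈ G.component v) : G.component w = G.component v := by
  rw [mem_component] at h
  ext u
  rw [mem_component, mem_component]
  exact ⟨fun hu => Relation.ReflTransGen.trans h hu,
    fun hu => Relation.ReflTransGen.trans (G.sameComp_symm h) hu⟩

theorem IsComponent.eq {T : Finset V} {G : MixedGraph V} (hT : G.IsComponent T) {v : V}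
    (hv : v ∈ T) : G.component v = T := by
  obtain ⟨u, rfl⟩ := hT
  exact G.component_eq_of_mem hv

theorem isComponent_component (v : V) : G.IsComponent (G.component v) := ⟨v, rfl⟩

theorem mem_componentsF {T : Finset V} : T ∈ G.componentsF ↔ G.IsComponent T := by
  unfold componentsF IsComponent
  simp only [Finset.mem_image, Finset.mem_univ, true_and]
  exact ⟨fun ⟨v, h⟩ => ⟨v, h.symm⟩, fun ⟨v, h⟩ => ⟨v, h.symm⟩⟩

theorem step_of_same {T : Finset V} (hT : G.IsComponent T) {a b : V} (ha : a ∈ T) (hb : b ∈ T) :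
    Relation.ReflTransGen G.step a b := by
  have h : b ∈ G.component a := by rw [hT.eq ha]; exact hb
  rw [mem_component] at h
  exact Relation.ReflTransGen.mono (fun _ _ h => Or.inr h) _ _ h

theorem reach {T₁ T₂ : Finset V} (h1 : G.IsComponent T₁)
    (h : Relation.ReflTransGen G.dirD T₁ T₂) :
    ∀ a ∈ T₁, ∀ b ∈ T₂, Relation.ReflTransGen G.step a b := by
  induction h with
  | refl => intro a ha b hb; exact G.step_of_same h1 ha hb
  | tail _ hbc ih =>
    obtain ⟨hB, hC, _, v, hv, w, hw, hvw⟩ := hbc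
    intro a ha b hb
    exact ((ih a ha v hv).tail (Or.inl hvw)).trans (G.step_of_same hC hw hb)

variable {G}

theorem acyc (hG : G.NoSemiDirectedCycle) {T₁ T₂ : Finset V} (h : G.dirD T₁ T₂) :
    ¬ Relation.ReflTransGen G.dirD T₂ T₁ := by
  obtain ⟨_, hC, _, v, hv, w, hw, hvw⟩ := h
  intro h
  exact hG v w hvw (G.reach hC h w hw v hv)

theorem irreflD (hG : G.NoSemiDirectedCycle) (T : Finset V) :
    ¬ Relation.TransGen G.dirD T T := by
  intro h
  obtain ⟨c, h1, h2⟩ := Relation.TransGen.head'_iff.1 h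
  exact acyc hG h1 h2

theorem exists_min (hG : G.NoSemiDirectedCycle) (S : Finset (Finset V)) (hS : S.Nonempty) :
    ∃ T ∈ S, ∀ T' ∈ S, ¬ Relation.TransGen G.dirD T' T := by
  have : Std.Irrefl (Relation.TransGen G.dirD) := ⟨irreflD hG⟩
  have : IsTrans _ (Relation.TransGen G.dirD) := ⟨fun _ _ _ h1 h2 => h1.trans h2⟩
  have wf := Finite.wellFounded_of_trans_of_irrefl (Relation.TransGen G.dirD)
  obtain ⟨T, hT, h⟩ := wf.has_min (S : Set (Finset V)) hS
  exact ⟨T, hT, h⟩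

theorem exists_max (hG : G.NoSemiDirectedCycle) (S : Finset (Finset V)) (hS : S.Nonempty) :
    ∃ T ∈ S, ∀ T' ∈ S, ¬ Relation.TransGen G.dirD T T' := by
  let R := Function.swap (Relation.TransGen G.dirD)
  have : Std.Irrefl R := ⟨irreflD hG⟩
  have : IsTrans _ R := ⟨fun _ _ _ h1 h2 => Relation.TransGen.trans h2 h1⟩
  have wf := Finite.wellFounded_of_trans_of_irrefl R
  obtain ⟨T, hT, h⟩ := wf.has_min (S : Set (Finset V)) hS
  exact ⟨T, hT, h⟩

theorem mem_paD {T : Finset V} {w : V} : w ∈ G.paD T ↔ G.dirD (G.component w) T := by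
  simp [paD]

theorem mem_ndD {T : Finset V} {w : V} :
    w ∈ G.ndD T ↔ ¬ Relation.ReflTransGen G.dirD T (G.component w) := by
  simp [ndD]

theorem disj_paD {T : Finset V} (hT : G.IsComponent T) : Disjoint T (G.paD T) := by
  rw [Finset.disjoint_left]
  intro v hv h
  rw [mem_paD, hT.eq hv] at h
  exact h.2.2.1 rfl

theorem disj_ndD {T : Finset V} (hT : G.IsComponent T) : Disjoint T (G.ndD T) := by
  rw [Finset.disjoint_left]
  intro v hv h
  rw [mem_ndD, hT.eq hv] at h
  exact h .refl

theorem paD_sub_ndD (hG : G.NoSemiDirectedCycle) (T : Finset V) : G.paD T ⊆ G.ndD T := by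
  intro w hw
  rw [mem_paD] at hw
  rw [mem_ndD]
  exact acyc hG hw

theorem paG_sub (hG : G.NoSemiDirectedCycle) {T A : Finset V} (hT : G.IsComponent T)
    (hA : A ⊆ T) : G.paG A ⊆ G.paD T := by
  intro w hw
  simp only [paG, Finset.mem_filter, Finset.mem_univ, true_and] at hw
  obtain ⟨_, v, hv, hwv⟩ := hw
  rw [mem_paD]
  refine ⟨G.isComponent_component w, hT, ?_, w, G.self_mem_component w, v, hA hv, hwv⟩
  intro h
  have hwT : w ∈ T := h ▸ G.self_mem_component w
  exact hG w v hwv (G.step_of_same hT (hA hv) hwT)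

theorem paG_erase (hG : G.NoSemiDirectedCycle) {T S : Finset V} (hT : G.IsComponent T)
    (hS : S ⊆ T) (v : V) : G.paG (S.erase v) ⊆ G.paG S := by
  intro w hw
  have h1 := paG_sub hG hT ((Finset.erase_subset v S).trans hS) hw
  simp only [paG, Finset.mem_filter, Finset.mem_univ, true_and] at hw ⊢
  obtain ⟨_, u, hu, hwu⟩ := hw
  exact ⟨fun h => Finset.disjoint_left.1 (disj_paD hT) (hS h) h1, u,
    Finset.mem_of_mem_erase hu, hwu⟩

theorem not_connected_union {A C : Finset V} (hA : A.Nonempty) (hC : C.Nonempty)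
    (hAC : Disjoint A C) (hN : ∀ a ∈ A, ∀ c ∈ C, ¬ G.undir a c) : ¬ G.ConnectedIn (A ∪ C) := by
  rintro ⟨_, h⟩
  obtain ⟨a, ha⟩ := hA
  obtain ⟨c, hc⟩ := hC
  have key : ∀ x, Relation.ReflTransGen
      (fun x y => x ∈ A ∪ C ∧ y ∈ A ∪ C ∧ G.undir x y) a x → x ∈ A := by
    intro x hx
    induction hx with
    | refl => exact ha
    | tail _ hbc ih =>
      rcases Finset.mem_union.1 hbc.2.1 with h | h
      · exact h
      · exact absurd hbc.2.2 (hN _ ih _ h)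
  exact Finset.disjoint_left.1 hAC
    (key c (h a (Finset.mem_union_left _ ha) c (Finset.mem_union_right _ hc))) hc

theorem connected_compIn {A : Finset V} {v : V} (hv : v ∈ A) : G.ConnectedIn (G.compIn A v) := by
  have hself : v ∈ G.compIn A v := by
    simp only [compIn, Finset.mem_filter]; exact ⟨hv, .refl⟩
  have key : ∀ w, Relation.ReflTransGen (fun x y => x ∈ A ∧ y ∈ A ∧ G.undir x y) v w →
      w ∈ G.compIn A v ∧ Relation.ReflTransGen
        (fun x y => x ∈ G.compIn A v ∧ y ∈ G.compIn A v ∧ G.undir x y) v w := by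
    intro w hw
    induction hw with
    | refl => exact ⟨hself, .refl⟩
    | @tail b c hab hbc ih =>
      have hc : c ∈ G.compIn A v := by
        simp only [compIn, Finset.mem_filter]
        exact ⟨hbc.2.1, hab.tail hbc⟩
      exact ⟨hc, ih.2.tail ⟨ih.1, hc, hbc.2.2⟩⟩
  have hsymm : ∀ x y, Relation.ReflTransGen
      (fun x y => x ∈ G.compIn A v ∧ y ∈ G.compIn A v ∧ G.undir x y) x y →
      Relation.ReflTransGen
        (fun x y => x ∈ G.compIn A v ∧ y ∈ G.compIn A v ∧ G.undir x y) y x := by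
    intro x y h
    induction h with
    | refl => exact .refl
    | tail _ hbc ih => exact .head ⟨hbc.2.1, hbc.1, G.undir_symm hbc.2.2⟩ ih
  refine ⟨⟨v, hself⟩, fun a ha b hb => ?_⟩
  simp only [compIn, Finset.mem_filter] at ha hb
  exact (hsymm _ _ (key a ha.2).2).trans (key b hb.2).2

theorem compIn_sub (A : Finset V) (v : V) : G.compIn A v ⊆ A := Finset.filter_subset _ _

theorem sdiff_compIn {A T : Finset V} (hA : A ⊆ T) {v : V} :
    A \ G.compIn A v ⊆ T \ G.nbG (G.compIn A v) := by
  intro w hw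
  rw [Finset.mem_sdiff] at hw ⊢
  refine ⟨hA hw.1, fun h => ?_⟩
  simp only [nbG, Finset.mem_union, Finset.mem_filter, Finset.mem_univ, true_and] at h
  rcases h with h | ⟨u, hu, huw⟩
  · exact hw.2 h
  · apply hw.2
    simp only [compIn, Finset.mem_filter] at hu ⊢
    exact ⟨hw.1, hu.2.tail ⟨hu.1, hw.1, huw⟩⟩

theorem exists_not_mem_compIn {A : Finset V} (hA : A.Nonempty) (h : ¬ G.ConnectedIn A) :
    ∃ v ∈ A, (A \ G.compIn A v).Nonempty := by
  by_contra H
  push Not at H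
  apply h
  refine ⟨hA, fun a ha b hb => ?_⟩
  have := H a ha
  rw [Finset.sdiff_eq_empty_iff_subset] at this
  have := this hb
  simp only [compIn, Finset.mem_filter] at this
  exact this.2

/-- A family of chain components closed under parents. -/
def Anc (G : MixedGraph V) (S : Finset (Finset V)) : Prop :=
  (∀ T ∈ S, G.IsComponent T) ∧ ∀ T ∈ S, ∀ T', G.dirD T' T → T' ∈ S

theorem mem_U {S : Finset (Finset V)} (hS : ∀ T ∈ S, G.IsComponent T) {w : V} :
    w ∈ S.biUnion id ↔ G.component w ∈ S := by
  rw [Finset.mem_biUnion]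
  constructor
  · rintro ⟨T, hT, hw⟩
    rw [(hS T hT).eq hw]; exact hT
  · intro h; exact ⟨_, h, G.self_mem_component w⟩

theorem paD_sub_U {S : Finset (Finset V)} (hS : G.Anc S) {T : Finset V} (hT : T ∈ S) :
    G.paD T ⊆ S.biUnion id := by
  intro w hw
  rw [mem_U hS.1]
  exact hS.2 T hT _ (mem_paD.1 hw)

theorem U_univ : G.componentsF.biUnion id = Finset.univ := by
  ext w
  rw [mem_U (G := G) (fun T hT => G.mem_componentsF.1 hT)]
  simp [mem_componentsF, isComponent_component]

end MixedGraph

open MixedGraph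

theorem factor_of_IV0 {G : MixedGraph V} (hG : G.NoSemiDirectedCycle) {p : Cell r → ℝ}
    (hp : IsPosPMF p)
    (h0 : ∀ T, G.IsComponent T → CondIndep p T (G.ndD T \ G.paD T) (G.paD T)) (n : ℕ) :
    ∀ S : Finset (Finset V), G.Anc S → S.card = n → ∀ i,
      marginal p (S.biUnion id) i = ∏ T ∈ S, condProb p T (G.paD T) i := by
  induction n with
  | zero =>
    intro S _ hn i
    rw [Finset.card_eq_zero] at hn
    subst hn
    simpa using marg_empty hp i
  | succ n ih =>
    intro S hS hn i
    obtain ⟨T, hT, hmax⟩ := exists_max hG S (by rw [← Finset.card_pos]; omega)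
    have hTc := hS.1 T hT
    have hS' : G.Anc (S.erase T) := by
      refine ⟨fun T' h => hS.1 T' (Finset.mem_of_mem_erase h), fun T₁ h1 T' h => ?_⟩
      refine Finset.mem_erase.2 ⟨?_, hS.2 T₁ (Finset.mem_of_mem_erase h1) T' h⟩
      rintro rfl
      exact hmax T₁ (Finset.mem_of_mem_erase h1) (.single h)
    have hU : S.biUnion id = T ∪ (S.erase T).biUnion id := by
      conv_lhs => rw [← Finset.insert_erase hT]
      rw [Finset.biUnion_insert]; rfl
    have hpa : G.paD T ⊆ (S.erase T).biUnion id := by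
      intro w hw
      have h1 := paD_sub_U hS hT hw
      rw [hU, Finset.mem_union] at h1
      rcases h1 with h1 | h1
      · exact absurd hw (Finset.disjoint_left.1 (disj_paD hTc) h1)
      · exact h1
    have hnd : (S.erase T).biUnion id ⊆ G.ndD T := by
      intro w hw
      rw [mem_U hS'.1, Finset.mem_erase] at hw
      rw [mem_ndD]
      intro h
      rcases Relation.reflTransGen_iff_eq_or_transGen.1 h with h | h
      · exact hw.1 h
      · exact hmax _ hw.2 h
    have hci := ci_mono (h0 T hTc)
      (Finset.sdiff_subset_sdiff hnd (Finset.Subset.refl (G.paD T)))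
      ((disj_ndD hTc).mono_right Finset.sdiff_subset) Finset.sdiff_disjoint i
    rw [Finset.union_assoc, Finset.sdiff_union_of_subset hpa, ← hU] at hci
    rw [← Finset.mul_prod_erase S _ hT, ← ih _ hS' (by rw [Finset.card_erase_of_mem hT]; omega) i]
    unfold condProb
    have := (marg_pos hp.1 (G.paD T) i).ne'
    field_simp
    linarith

theorem marg_of_factor {G : MixedGraph V} (hG : G.NoSemiDirectedCycle) {p : Cell r → ℝ}
    (hp : IsPosPMF p)
    (hf : ∀ i, p i = ∏ T ∈ G.componentsF, condProb p T (G.paD T) i) (n : ℕ) :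
    ∀ S : Finset (Finset V), G.Anc S → (G.componentsF \ S).card = n → ∀ i,
      marginal p (S.biUnion id) i = ∏ T ∈ S, condProb p T (G.paD T) i := by
  induction n with
  | zero =>
    intro S hS hn i
    rw [Finset.card_eq_zero, Finset.sdiff_eq_empty_iff_subset] at hn
    have : S = G.componentsF :=
      Finset.Subset.antisymm (fun T hT => G.mem_componentsF.2 (hS.1 T hT)) hn
    rw [this, U_univ, marg_univ, hf]
  | succ n ih =>
    intro S hS hn
    obtain ⟨T, hT, hmin⟩ := exists_min hG (G.componentsF \ S) (by rw [← Finset.card_pos]; omega)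
    rw [Finset.mem_sdiff] at hT
    have hTc := G.mem_componentsF.1 hT.1
    have hS' : G.Anc (insert T S) := by
      refine ⟨fun T' h => ?_, fun T₁ h1 T' h => ?_⟩
      · rcases Finset.mem_insert.1 h with rfl | h
        · exact hTc
        · exact hS.1 T' h
      · rcases Finset.mem_insert.1 h1 with rfl | h1
        · refine Finset.mem_insert_of_mem ?_
          by_contra H
          exact hmin T' (Finset.mem_sdiff.2 ⟨G.mem_componentsF.2 h.1, H⟩) (.single h)
        · exact Finset.mem_insert_of_mem (hS.2 T₁ h1 T' h)
    have hI := ih _ hS' (by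
      have : G.componentsF \ insert T S = (G.componentsF \ S).erase T := by
        ext x; simp only [Finset.mem_sdiff, Finset.mem_insert, Finset.mem_erase]; tauto
      rw [this, Finset.card_erase_of_mem (Finset.mem_sdiff.2 hT)]; omega)
    have hdU : Disjoint T (S.biUnion id) := by
      rw [Finset.disjoint_left]
      intro v hv h
      rw [mem_U hS.1, hTc.eq hv] at h
      exact hT.2 h
    set Q : Cell r → ℝ := fun i => ∏ T ∈ S, condProb p T (G.paD T) i with hQ
    have hQu : ∀ v ∈ T, ∀ j x, Q (Function.update j v x) = Q j := by
      intro v hv j x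
      refine Finset.prod_congr rfl fun T' hT' => ?_
      have hvU := Finset.disjoint_left.1 hdU hv
      exact condProb_update p (fun h => hvU (Finset.mem_biUnion.2 ⟨T', hT', h⟩))
        (fun h => hvU (paD_sub_U hS hT' h)) j x
    have := marg_sum_out p (S.biUnion id) (G.paD T) (fun _ => 1)
      (fun i => Q i / marginal p (G.paD T) i) T hdU (disj_paD hTc) (fun _ _ _ _ => rfl)
      (fun v hv j x => by
        rw [hQu v hv, marg_update p (Finset.disjoint_left.1 (disj_paD hTc) hv)])
      (fun j => by
        have h1 := hI j
        rw [Finset.biUnion_insert, Finset.prod_insert hT.2, Finset.union_comm] at h1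
        simp only [id] at h1 ⊢
        rw [mul_one, h1, Finset.union_comm (G.paD T) T]
        unfold condProb
        simp only [hQ]
        unfold condProb
        ring)
    intro i
    have h2 := this i
    have := (marg_pos hp.1 (G.paD T) i).ne'
    simp only [mul_one] at h2
    rw [h2, mul_div_cancel₀ _ this]

theorem IV0_of_factor {G : MixedGraph V} (hG : G.NoSemiDirectedCycle) {p : Cell r → ℝ}
    (hp : IsPosPMF p)
    (hf : ∀ i, p i = ∏ T ∈ G.componentsF, condProb p T (G.paD T) i)
    (T : Finset V) (hT : G.IsComponent T) : CondIndep p T (G.ndD T \ G.paD T) (G.paD T) := by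
  set S : Finset (Finset V) :=
    G.componentsF.filter fun T' => ¬ Relation.ReflTransGen G.dirD T T' with hSdef
  have memS : ∀ T', T' ∈ S ↔ G.IsComponent T' ∧ ¬ Relation.ReflTransGen G.dirD T T' := by
    intro T'; rw [hSdef, Finset.mem_filter, mem_componentsF]
  have hS : G.Anc S := by
    refine ⟨fun T' h => ((memS T').1 h).1, fun T₁ h1 T' h => (memS T').2 ⟨h.1, fun H => ?_⟩⟩
    exact ((memS T₁).1 h1).2 (H.tail h)
  have hS' : G.Anc (insert T S) := by
    refine ⟨fun T' h => ?_, fun T₁ h1 T' h => ?_⟩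
    · rcases Finset.mem_insert.1 h with rfl | h
      · exact hT
      · exact hS.1 T' h
    · rcases Finset.mem_insert.1 h1 with rfl | h1
      · exact Finset.mem_insert_of_mem ((memS T').2 ⟨h.1, acyc hG h⟩)
      · exact Finset.mem_insert_of_mem (hS.2 T₁ h1 T' h)
  have hTS : T ∉ S := fun h => ((memS T).1 h).2 .refl
  have hU : S.biUnion id = G.ndD T := by
    ext w
    rw [mem_U hS.1, memS, mem_ndD]
    exact ⟨fun h => h.2, fun h => ⟨G.isComponent_component w, h⟩⟩
  intro i
  have h1 := marg_of_factor hG hp hf _ S hS rfl i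
  have h2 := marg_of_factor hG hp hf _ _ hS' rfl i
  rw [Finset.prod_insert hTS, ← h1, Finset.biUnion_insert, hU] at h2
  rw [Finset.union_assoc, Finset.sdiff_union_of_subset (paD_sub_ndD hG T)]
  simp only [id] at h2
  rw [h2]
  unfold condProb
  have := (marg_pos hp.1 (G.paD T) i).ne'
  field_simp

end Helpers

open MixedGraph

/-- Corollary 1: a strictly positive joint pmf obeys the
block-recursive Markov property of type IV for `G` iff it factorizes over the
chain components as `p(i) = ∏_T p(i_T | i_{pa_D(T)})` and, for each component
`T` and nonempty `A ⊆ T`, the multivariate logistic contrasts of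
`p_{A|pa_D(T)}` satisfy `η^{(A)} = Σ_{b ⊆ pa_G(A)} β^{(A)}_b` for
baseline-coded functions `β^{(A)}_b` when `A` is connected, and `η^{(A)} = 0`
when `A` is disconnected. -/
theorem typeIV_iff_factorization_and_mlContrast
    {V : Type*} [Fintype V] [DecidableEq V] {r : V → ℕ} (hr : ∀ v, 2 ≤ r v)
    (G : MixedGraph V) (hG : G.NoSemiDirectedCycle)
    (p : Cell r → ℝ) (hp : IsPosPMF p) :
    TypeIVMarkov G p ↔
      ((∀ i : Cell r,
          p i = ∏ T ∈ G.componentsF, condProb p T (G.paD T) i) ∧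
        ∀ T : Finset V, G.IsComponent T → ∀ A ⊆ T, A.Nonempty →
          (G.ConnectedIn A →
            ∃ beta : Finset V → Cell r → ℝ,
              (∀ b, ∀ i j : Cell r, (∀ v ∈ A ∪ b, i v = j v) →
                beta b i = beta b j) ∧
              (∀ b, ∀ i : Cell r, (∃ v ∈ b, (i v : ℕ) = 0) → beta b i = 0) ∧
              (∀ i : Cell r, (∀ v ∈ A, (i v : ℕ) ≠ 0) →
                mlContrast hr p A (G.paD T) i =
                  ∑ b ∈ (G.paG A).powerset, beta b i)) ∧
          (¬ G.ConnectedIn A →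
            ∀ i : Cell r, (∀ v ∈ A, (i v : ℕ) ≠ 0) →
              mlContrast hr p A (G.paD T) i = 0)) := by
  constructor
  · rintro ⟨h0, h1, h2⟩
    refine ⟨fun i => ?_, fun T hT A hA hAne => ⟨fun _ => ?_, fun hd i _ => ?_⟩⟩
    · have := factor_of_IV0 hG hp h0 _ G.componentsF
        ⟨fun T hT => G.mem_componentsF.1 hT, fun _ _ T' h => G.mem_componentsF.2 h.1⟩ rfl i
      rwa [U_univ, marg_univ] at this
    · have hdep := dep_of_ci hp.1 (paG_sub hG hT hA) (h1 T hT A hA)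
      obtain ⟨beta, hb1, hb2, hb3⟩ := exists_beta hr A (G.paG A)
        (fun i => mlContrast hr p A (G.paD T) i) (mlContrast_dep hr p hdep)
      exact ⟨beta, hb1, hb2, fun i _ => hb3 i⟩
    · obtain ⟨v, hv, hne⟩ := exists_not_mem_compIn hAne hd
      have hsub := sdiff_compIn (G := G) hA (v := v)
      have hcA : G.compIn A v ⊆ T := (compIn_sub A v).trans hA
      have hdis := disj_paD hT
      have hci := ci_mono (h2 T hT _ hcA (connected_compIn hv)) hsub
        (by
          rw [Finset.disjoint_left]
          intro w hw h
          exact (Finset.mem_sdiff.1 h).2 (Finset.mem_union_left _ hw))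
        (hdis.mono_left Finset.sdiff_subset)
      have := contrast_zero_of_ci hr hp.1 hci (connected_compIn hv).1 hne Finset.disjoint_sdiff
        (hdis.mono_left hcA) (hdis.mono_left (Finset.sdiff_subset.trans hA)) i
      rwa [Finset.union_sdiff_of_subset (compIn_sub A v)] at this
  · rintro ⟨hf, hc⟩
    refine ⟨IV0_of_factor hG hp hf, fun T hT A hA => ?_, fun T hT A hA _ => ?_⟩
    · refine ci_of_dep hp.1 (paG_sub hG hT hA) ((disj_paD hT).mono_left hA) ?_
      refine dep_of_contrast hr hp.1 (disj_paD hT) G.paG (fun S hS v _ => paG_erase hG hT hS v)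
        ?_ _ A hA rfl
      intro S hS hne j hj
      have hj' : ∀ v ∈ S, ((splice hr (S ∪ G.paG S) j v : Fin (r v)) : ℕ) ≠ 0 := by
        intro v hv
        rw [splice_of_mem hr (Finset.mem_union_left _ hv)]
        exact hj v hv
      by_cases hcon : G.ConnectedIn S
      · obtain ⟨beta, hb1, -, hb3⟩ := (hc T hT S hS hne).1 hcon
        rw [hb3 j hj, hb3 _ hj']
        refine Finset.sum_congr rfl fun b hb => hb1 b _ _ fun v hv => ?_
        rw [splice_of_mem]
        exact Finset.union_subset_union_right (Finset.mem_powerset.1 hb) hv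
      · rw [(hc T hT S hS hne).2 hcon j hj, (hc T hT S hS hne).2 hcon _ hj']
    · refine ci_of_contrast hr hp.1 (disj_paD hT) (fun a c => ¬ G.undir a c) ?_ _ A
        (T \ G.nbG A) rfl hA Finset.sdiff_subset ?_ ?_
      · intro A C hA hC hAne hCne hAC hN i hi
        exact (hc T hT _ (Finset.union_subset hA hC) (hAne.mono Finset.subset_union_left)).2
          (not_connected_union hAne hCne hAC hN) i hi
      · rw [Finset.disjoint_left]
        intro w hw h
        exact (Finset.mem_sdiff.1 h).2 (Finset.mem_union_left _ hw)
      · intro a ha c hc' hac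
        refine (Finset.mem_sdiff.1 hc').2 (Finset.mem_union_right _ ?_)
        simp only [Finset.mem_filter, Finset.mem_univ, true_and]
        exact ⟨a, ha, hac⟩
end

section
/- Let G be a chain graph with chain components 𝒯 and ≺ a consistent strict total order of 𝒯, and let the strictly positive joint probability mass function p obey the multivariate regression Markov property for G. Then p satisfies the pairwise Markov property: for every pair of uncoupled nodes i, k (joined by no edge of G), if i, k lie in the same chain component T then {i} ⊥ {k} | pre(T), and if i ∈ T and k ∈ pre(T) then {i} ⊥ {k} | pre(T)∖{k}. -/
open scoped Classical BigOperators

variable {V : Type*} [Fintype V] [DecidableEq V] {r : V → ℕ}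

theorem aux_marginal_pos (p : Cell r → ℝ) (hp : IsPosPMF p) (S : Finset V) (i : Cell r) :
    0 < marginal p S i := by
  unfold marginal
  refine Finset.sum_pos' (fun j _ => ?_) ⟨i, Finset.mem_univ _, ?_⟩
  · split_ifs
    · exact (hp.1 j).le
    · exact le_rfl
  · simp [hp.1 i]

theorem aux_marginal_congr (p : Cell r → ℝ) (S : Finset V) (i i' : Cell r)
    (h : ∀ v ∈ S, i v = i' v) : marginal p S i = marginal p S i' := by
  unfold marginal
  refine Finset.sum_congr rfl fun j _ => ?_
  have : (∀ v ∈ S, j v = i v) ↔ (∀ v ∈ S, j v = i' v) :=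
    forall₂_congr fun v hv => by rw [h v hv]
  simp only [this]

theorem aux_marginal_update (p : Cell r → ℝ) (S : Finset V) (i : Cell r) (b : V) (hb : b ∉ S)
    (x : Fin (r b)) : marginal p S (Function.update i b x) = marginal p S i := by
  apply aux_marginal_congr
  intro v hv
  have : v ≠ b := fun h => hb (h ▸ hv)
  simp [this]

theorem aux_marginal_sum (p : Cell r → ℝ) (S : Finset V) (i : Cell r) (b : V) (hb : b ∉ S) :
    marginal p S i = ∑ x : Fin (r b), marginal p (insert b S) (Function.update i b x) := by
  unfold marginal
  rw [Finset.sum_comm]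
  refine Finset.sum_congr rfl fun j _ => ?_
  have key : ∀ x : Fin (r b), (∀ v ∈ insert b S, j v = Function.update i b x v) ↔
      (x = j b ∧ ∀ v ∈ S, j v = i v) := by
    intro x
    rw [Finset.forall_mem_insert]
    refine and_congr (by simp [eq_comm]) (forall₂_congr fun v hv => ?_)
    have : v ≠ b := fun h => hb (h ▸ hv)
    simp [this]
  by_cases h : ∀ v ∈ S, j v = i v
  · rw [if_pos h, Finset.sum_eq_single (j b)]
    · rw [if_pos ((key _).2 ⟨rfl, h⟩)]
    · intro x _ hx
      rw [if_neg fun hc => hx ((key x).1 hc).1]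
    · intro hc
      exact absurd (Finset.mem_univ _) hc
  · rw [if_neg h]
    refine (Finset.sum_eq_zero fun x _ => ?_).symm
    rw [if_neg fun hc => h ((key x).1 hc).2]

/-- Weak union for a single node. -/
theorem aux_weak_union (p : Cell r → ℝ) (hp : IsPosPMF p) (a b : V) (C P : Finset V)
    (hab : a ≠ b) (hCP : C ⊆ P) (hbP : b ∈ P) (hbC : b ∉ C)
    (h : ∀ i, marginal p ({a} ∪ P) i * marginal p C i =
      marginal p ({a} ∪ C) i * marginal p P i) (i : Cell r) :
    marginal p ({a} ∪ P) i * marginal p (P \ {b}) i =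
      marginal p ({a} ∪ (P \ {b})) i * marginal p P i := by
  have hb1 : b ∉ P \ {b} := by simp
  have hb2 : b ∉ {a} ∪ (P \ {b}) := by simp [hab.symm]
  have hb3 : b ∉ {a} ∪ C := by simp [hab.symm, hbC]
  have e1 : insert b (P \ {b}) = P := by ext v; by_cases hv : v = b <;> simp [hv, hbP]
  have e2 : insert b ({a} ∪ (P \ {b})) = {a} ∪ P := by
    ext v; by_cases hv : v = b <;> simp [hv, hbP]
  have h2 : marginal p ({a} ∪ (P \ {b})) i * marginal p C i =
      marginal p ({a} ∪ C) i * marginal p (P \ {b}) i := by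
    rw [aux_marginal_sum p _ i b hb2, aux_marginal_sum p (P \ {b}) i b hb1, e1, e2,
      Finset.sum_mul, Finset.mul_sum]
    refine Finset.sum_congr rfl fun x _ => ?_
    have := h (Function.update i b x)
    rwa [aux_marginal_update p C i b hbC, aux_marginal_update p _ i b hb3] at this
  have hC := aux_marginal_pos p hp C i
  apply mul_right_cancel₀ hC.ne'
  linear_combination marginal p (P \ {b}) i * h i - marginal p P i * h2

theorem aux_component_eq (G : MixedGraph V) (v w : V) (h : w ∈ G.component v) :
    G.component w = G.component v := by
  have h : G.sameComp v w := by simpa [MixedGraph.component] using h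
  have sym : ∀ {x y}, G.sameComp x y → G.sameComp y x := by
    intro x y hxy
    unfold MixedGraph.sameComp at *
    induction hxy with
    | refl => exact .refl
    | tail _ h2 ih => exact Relation.ReflTransGen.head (G.undir_symm h2) ih
  ext x
  simp only [MixedGraph.component, Finset.mem_filter, Finset.mem_univ, true_and]
  exact ⟨fun hx => Relation.ReflTransGen.trans h hx,
    fun hx => Relation.ReflTransGen.trans (sym h) hx⟩

theorem aux_mem_component (G : MixedGraph V) (v : V) : v ∈ G.component v := by
  simp only [MixedGraph.component, Finset.mem_filter, Finset.mem_univ, true_and]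
  exact Relation.ReflTransGen.refl

theorem aux_parent_pre (G : MixedGraph V) (hG : G.NoSemiDirectedCycle)
    (ord : Finset V → Finset V → Prop) (hord : G.ConsistentOrder ord)
    (T : Finset V) (hT : G.IsComponent T) (a w : V) (ha : a ∈ T) (hw : G.dir w a) :
    w ∈ G.pre ord T := by
  have hTa : G.component a = T := by
    obtain ⟨v, rfl⟩ := hT
    exact aux_component_eq G v a ha
  have hne : T ≠ G.component w := by
    intro he
    have : w ∈ G.component a := by rw [hTa, he]; exact aux_mem_component G w
    have : G.sameComp a w := by simpa [MixedGraph.component] using this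
    exact hG w a hw (Relation.ReflTransGen.mono (fun _ _ h => Or.inr h) _ _ this)
  have hcw : G.IsComponent (G.component w) := ⟨w, rfl⟩
  simp only [MixedGraph.pre, Finset.mem_filter, Finset.mem_univ, true_and]
  rcases hord.1 T _ hT hcw hne with h | h
  · exact h
  · exact absurd ⟨hcw, hT, hne.symm, w, aux_mem_component G w, a, ha, hw⟩
      (hord.2.2.2 _ _ hcw hT h)

theorem aux_compIn (G : MixedGraph V) (A : Finset V) (a : V) (ha : a ∈ A)
    (h : ∀ x ∈ A, ¬ G.undir a x) : G.compIn A a = {a} := by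
  ext w
  simp only [MixedGraph.compIn, Finset.mem_filter, Finset.mem_singleton]
  constructor
  · rintro ⟨_, hw⟩
    rcases Relation.ReflTransGen.cases_head hw with rfl | ⟨c, hc, _⟩
    · rfl
    · exact absurd hc.2.2 (h c hc.2.1)
  · rintro rfl
    exact ⟨ha, .refl⟩

/-- Remark 1, pairwise Markov property: under the
multivariate regression Markov property, for every uncoupled pair of nodes
`a, b`: if they lie in the same chain component `T` then `{a} ⊥ {b} | pre(T)`,
and if `a ∈ T` while `b ∈ pre(T)` then `{a} ⊥ {b} | pre(T)∖{b}`. -/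
theorem mr_markov_pairwise
    {V : Type*} [Fintype V] [DecidableEq V] {r : V → ℕ} (hr : ∀ v, 2 ≤ r v)
    (G : MixedGraph V) (hG : G.NoSemiDirectedCycle)
    (ord : Finset V → Finset V → Prop) (hord : G.ConsistentOrder ord)
    (p : Cell r → ℝ) (hp : IsPosPMF p) (hMR : MRMarkov G ord p) :
    ∀ a b : V, a ≠ b →
      ¬ G.dir a b → ¬ G.dir b a → ¬ G.undir a b →
      (∀ T : Finset V, G.IsComponent T → a ∈ T → b ∈ T →
        CondIndep p {a} {b} (G.pre ord T)) ∧
      (∀ T : Finset V, G.IsComponent T → a ∈ T → b ∈ G.pre ord T →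
        CondIndep p {a} {b} (G.pre ord T \ {b})) := by
  intro a b hab hdab hdba hu
  refine ⟨fun T hT ha hb => ?_, fun T hT ha hb => ?_⟩
  · have hua : ∀ x ∈ ({a, b} : Finset V), ¬ G.undir a x := by
      intro x hx
      rcases Finset.mem_insert.1 hx with rfl | hx
      · exact G.undir_irrefl _
      · rw [Finset.mem_singleton.1 hx]; exact hu
    have hub : ∀ x ∈ ({a, b} : Finset V), ¬ G.undir b x := by
      intro x hx
      rcases Finset.mem_insert.1 hx with rfl | hx
      · exact fun h => hu (G.undir_symm h)
      · rw [Finset.mem_singleton.1 hx]; exact G.undir_irrefl _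
    have hma : a ∈ ({a, b} : Finset V) := by simp
    have hmb : b ∈ ({a, b} : Finset V) := by simp
    have hca := aux_compIn G {a, b} a hma hua
    have hcb := aux_compIn G {a, b} b hmb hub
    have hnc : ¬ G.ConnectedIn {a, b} := by
      intro hc
      have h1 : b ∈ G.compIn {a, b} a := by
        simp only [MixedGraph.compIn, Finset.mem_filter]
        exact ⟨hmb, hc.2 a hma b hmb⟩
      rw [hca] at h1
      exact hab (Finset.mem_singleton.1 h1).symm
    have hsub : ({a, b} : Finset V) ⊆ T := by
      intro x hx
      rcases Finset.mem_insert.1 hx with rfl | hx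
      · exact ha
      · rw [Finset.mem_singleton.1 hx]; exact hb
    intro i
    have h := (hMR T hT {a, b} hsub ⟨a, hma⟩).2 hnc i
    have hcc : G.connComps {a, b} = {{a}, {b}} := by
      ext S
      simp only [MixedGraph.connComps, Finset.mem_image, Finset.mem_insert,
        Finset.mem_singleton]
      constructor
      · rintro ⟨v, rfl | rfl, rfl⟩
        · exact Or.inl hca
        · exact Or.inr hcb
      · rintro (rfl | rfl)
        · exact ⟨a, Or.inl rfl, hca⟩
        · exact ⟨b, Or.inr rfl, hcb⟩
    rw [hcc, Finset.prod_pair (by simpa using hab)] at h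
    have hP := aux_marginal_pos p hp (G.pre ord T) i
    have e : ({a} ∪ {b} : Finset V) = {a, b} := rfl
    unfold condProb at h
    rw [e]
    field_simp at h
    linarith
  · have hsing : G.ConnectedIn {a} := by
      refine ⟨⟨a, by simp⟩, fun x hx y hy => ?_⟩
      rw [Finset.mem_singleton.1 hx, Finset.mem_singleton.1 hy]
    have h := (hMR T hT {a} (by simpa using ha) ⟨a, by simp⟩).1 hsing
    have hsub : G.paG {a} ⊆ G.pre ord T := by
      intro w hw
      simp only [MixedGraph.paG, Finset.mem_filter, Finset.mem_singleton] at hw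
      obtain ⟨_, _, v, rfl, hv⟩ := hw
      exact aux_parent_pre G hG ord hord T hT _ w ha hv
    have hbC : b ∉ G.paG {a} := by
      intro hw
      simp only [MixedGraph.paG, Finset.mem_filter, Finset.mem_singleton] at hw
      obtain ⟨_, _, v, rfl, hv⟩ := hw
      exact hdba hv
    have e1 : G.pre ord T \ G.paG {a} ∪ G.paG {a} = G.pre ord T :=
      Finset.sdiff_union_of_subset hsub
    have e2 : {b} ∪ G.pre ord T \ {b} = G.pre ord T :=
      Finset.union_sdiff_of_subset (by simpa using hb)
    intro i
    rw [Finset.union_assoc, e2]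
    refine aux_weak_union p hp a b (G.paG {a}) (G.pre ord T) hab hsub hb hbC (fun j => ?_) i
    have := h j
    rwa [Finset.union_assoc, e1] at this
end

section
/- Let G be a chain graph with chain components 𝒯 and ≺ a consistent strict total order of 𝒯, and let the strictly positive joint probability mass function p obey the multivariate regression Markov property for G. If i, k, ℓ are three distinct nodes of the same chain component T such that there is no edge between i and k and no edge between i and ℓ, then {i} ⊥ {k, ℓ} | pre(T). In particular, the pairwise independencies {i} ⊥ {k} | pre(T) and {i} ⊥ {ℓ} | pre(T) occur only in combination with the joint independence {i} ⊥ {k, ℓ} | pre(T) (the composition property holds). -/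
open scoped Classical BigOperators

variable {V : Type*} [Fintype V] [DecidableEq V] {r : V → ℕ}

lemma compIn_isolated {V : Type*} [Fintype V] [DecidableEq V] (G : MixedGraph V) (A : Finset V) (v : V)
    (hv : v ∈ A) (h : ∀ w ∈ A, ¬ G.undir v w) : G.compIn A v = {v} := by
  ext w
  simp only [MixedGraph.compIn, Finset.mem_filter, Finset.mem_singleton]
  constructor
  · rintro ⟨_, hw⟩
    rcases Relation.ReflTransGen.cases_head hw with h1 | ⟨c, ⟨_, hc, hu⟩, _⟩
    · exact h1.symm
    · exact absurd hu (h c hc)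
  · rintro rfl
    exact ⟨hv, Relation.ReflTransGen.refl⟩

lemma compIn_pair {V : Type*} [Fintype V] [DecidableEq V] (G : MixedGraph V) (a k l : V)
    (hak : a ≠ k) (hal : a ≠ l) (hk : ¬ G.undir a k) (hl : ¬ G.undir a l) (hkl : G.undir k l) :
    G.compIn {a, k, l} k = {k, l} := by
  ext w
  simp only [MixedGraph.compIn, Finset.mem_filter, Finset.mem_singleton, Finset.mem_insert]
  constructor
  · rintro ⟨hmem, hw⟩
    clear hmem
    induction hw with
    | refl => exact Or.inl rfl
    | tail _ h2 ih =>
      obtain ⟨_, hc, hu⟩ := h2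
      rcases hc with rfl | h
      · rcases ih with rfl | rfl
        · exact absurd (G.undir_symm hu) hk
        · exact absurd (G.undir_symm hu) hl
      · exact h
  · rintro (rfl | rfl)
    · exact ⟨by simp, Relation.ReflTransGen.refl⟩
    · exact ⟨by simp, Relation.ReflTransGen.single ⟨by simp, by simp, hkl⟩⟩

lemma not_connectedIn_of_isolated {V : Type*} [Fintype V] [DecidableEq V] (G : MixedGraph V)
    (A : Finset V) (v w : V)
    (hv : v ∈ A) (hw : w ∈ A) (hvw : v ≠ w) (h : ∀ w ∈ A, ¬ G.undir v w) : ¬ G.ConnectedIn A := by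
  rintro ⟨_, hc⟩
  rcases Relation.ReflTransGen.cases_head (hc v hv w hw) with h1 | ⟨c, ⟨_, hc, hu⟩, _⟩
  · exact hvw h1
  · exact h c hc hu

lemma marginal_pos {V : Type*} [Fintype V] [DecidableEq V] {r : V → ℕ} (p : Cell r → ℝ)
    (hp : IsPosPMF p) (S : Finset V) (i : Cell r) : 0 < marginal p S i := by
  unfold marginal
  refine Finset.sum_pos' (fun j _ => ?_) ⟨i, Finset.mem_univ _, ?_⟩
  · split_ifs
    · exact (hp.1 j).le
    · exact le_rfl
  · simpa using hp.1 i

/-- Remark 1, composition: under the multivariate regression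
Markov property, if `a, k, l` are three distinct nodes of a chain component
`T` with no edge between `a` and `k` and no edge between `a` and `l`, then
`{a} ⊥ {k, l} | pre(T)`; i.e. the two pairwise independencies
`{a} ⊥ {k} | pre(T)` and `{a} ⊥ {l} | pre(T)` occur only in combination with
the joint independence (composition holds). -/
theorem mr_markov_composition
    {V : Type*} [Fintype V] [DecidableEq V] {r : V → ℕ} (hr : ∀ v, 2 ≤ r v)
    (G : MixedGraph V) (hG : G.NoSemiDirectedCycle)
    (ord : Finset V → Finset V → Prop) (hord : G.ConsistentOrder ord)
    (p : Cell r → ℝ) (hp : IsPosPMF p) (hMR : MRMarkov G ord p) :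
    ∀ T : Finset V, G.IsComponent T → ∀ a k l : V,
      a ∈ T → k ∈ T → l ∈ T → a ≠ k → a ≠ l → k ≠ l →
      ¬ G.undir a k → ¬ G.dir a k → ¬ G.dir k a →
      ¬ G.undir a l → ¬ G.dir a l → ¬ G.dir l a →
      CondIndep p {a} {k, l} (G.pre ord T) := by
  intro T hT a k l ha hk hl hak hal hkl uak _ _ ual _ _ i
  have key : condProb p {a, k, l} (G.pre ord T) i =
      condProb p {a} (G.pre ord T) i * condProb p {k, l} (G.pre ord T) i := by
    have hA : ({a, k, l} : Finset V) ⊆ T := by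
      intro x hx
      simp only [Finset.mem_insert, Finset.mem_singleton] at hx
      rcases hx with rfl | rfl | rfl <;> assumption
    have hB : ({k, l} : Finset V) ⊆ T := by
      intro x hx
      simp only [Finset.mem_insert, Finset.mem_singleton] at hx
      rcases hx with rfl | rfl <;> assumption
    have isoa : ∀ w ∈ ({a, k, l} : Finset V), ¬ G.undir a w := by
      intro x hx
      simp only [Finset.mem_insert, Finset.mem_singleton] at hx
      rcases hx with rfl | rfl | rfl
      · exact G.undir_irrefl _
      · exact uak
      · exact ual
    have h1 := (hMR T hT {a, k, l} hA ⟨a, by simp⟩).2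
      (not_connectedIn_of_isolated G _ a k (by simp) (by simp) hak isoa) i
    have ca := compIn_isolated G {a, k, l} a (by simp) isoa
    by_cases ukl : G.undir k l
    · have ck := compIn_pair G a k l hak hal uak ual ukl
      have cl : G.compIn {a, k, l} l = {k, l} := by
        have := compIn_pair G a l k hal hak ual uak (G.undir_symm ukl)
        rwa [Finset.pair_comm l k] at this
      have hcc : G.connComps {a, k, l} = {{a}, {k, l}} := by
        unfold MixedGraph.connComps
        ext x
        simp [Finset.mem_image, ca, ck, cl, eq_comm]
      rw [h1, hcc, Finset.prod_pair]
      intro h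
      have : k ∈ ({a} : Finset V) := by rw [h]; simp
      exact hak (Finset.mem_singleton.1 this).symm
    · have ulk : ¬ G.undir l k := fun h => ukl (G.undir_symm h)
      have uka : ¬ G.undir k a := fun h => uak (G.undir_symm h)
      have ula : ¬ G.undir l a := fun h => ual (G.undir_symm h)
      have ck := compIn_isolated G {a, k, l} k (by simp)
        (by simp [uka, ukl, G.undir_irrefl])
      have cl := compIn_isolated G {a, k, l} l (by simp)
        (by simp [ula, ulk, G.undir_irrefl])
      have isok : ∀ w ∈ ({k, l} : Finset V), ¬ G.undir k w := by
        simp [ukl, G.undir_irrefl]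
      have ck2 := compIn_isolated G {k, l} k (by simp) isok
      have cl2 := compIn_isolated G {k, l} l (by simp)
        (by simp [ulk, G.undir_irrefl])
      have h2 := (hMR T hT {k, l} hB ⟨k, by simp⟩).2
        (not_connectedIn_of_isolated G _ k l (by simp) (by simp) hkl isok) i
      have hcc : G.connComps {a, k, l} = {{a}, {k}, {l}} := by
        unfold MixedGraph.connComps
        ext x
        simp [Finset.mem_image, ca, ck, cl, eq_comm]
      have hcc2 : G.connComps {k, l} = {{k}, {l}} := by
        unfold MixedGraph.connComps
        ext x
        simp [Finset.mem_image, ck2, cl2, eq_comm]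
      rw [h1, h2, hcc, hcc2, Finset.prod_insert]
      simp [hak, hal]
  have hpos := (marginal_pos p hp (G.pre ord T) i).ne'
  unfold condProb at key
  have e : ({a} ∪ {k, l} : Finset V) = {a, k, l} := rfl
  rw [e]
  field_simp at key
  linarith
end

section
/- Let V be a finite set carrying a mixed graph with a set of directed edges and a symmetric irreflexive set of undirected edges, and suppose the graph has no semi-directed cycle. Define a relation on the connected components of the undirected part of the graph by T1 → T2 if and only if T1 ≠ T2 and there is a directed edge from a node of T1 to a node of T2. Then this relation on components has no directed cycle; i.e., the directed graph D of chain components is a directed acyclic graph. -/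
open scoped Classical BigOperators

variable {V : Type*} [Fintype V] [DecidableEq V] {r : V → ℕ}

/-- Any two nodes of a chain component are joined by a semi-directed path. -/
theorem MixedGraph.reach_of_isComponent {V : Type*} [Fintype V]
    (G : MixedGraph V) {T : Finset V} (hT : G.IsComponent T) {a b : V}
    (ha : a ∈ T) (hb : b ∈ T) : Relation.ReflTransGen G.step a b := by
  obtain ⟨v, rfl⟩ := hT
  have ha2 : Relation.ReflTransGen G.undir v a := (Finset.mem_filter.mp ha).2
  have hb2 : Relation.ReflTransGen G.undir v b := (Finset.mem_filter.mp hb).2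
  have hs : Std.Symm G.undir := ⟨fun _ _ h => G.undir_symm h⟩
  have h1 : Relation.ReflTransGen G.undir a v :=
    Relation.ReflTransGen.stdSymm.symm _ _ ha2
  exact Relation.ReflTransGen.mono (fun _ _ h => Or.inr h) _ _ (h1.trans hb2)

/-- A directed path of components lifts to semi-directed paths of nodes. -/
theorem MixedGraph.reach_of_path {V : Type*} [Fintype V]
    (G : MixedGraph V) {S T : Finset V} (hS : G.IsComponent S)
    (h : Relation.ReflTransGen G.dirD S T) :
    ∀ a ∈ S, ∀ b ∈ T, Relation.ReflTransGen G.step a b := by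
  induction h with
  | refl => exact fun a ha b hb => G.reach_of_isComponent hS ha hb
  | tail _ hd ih =>
    intro a ha b hb
    obtain ⟨_, h2, _, v, hv, w, hw, hvw⟩ := hd
    exact ((ih a ha v hv).tail (Or.inl hvw)).trans (G.reach_of_isComponent h2 hw hb)

/-- for a mixed graph with no semi-directed cycle, the
induced directed graph `D` on the chain components has no directed cycle,
i.e. `D` is a directed acyclic graph. -/
theorem componentGraph_acyclic
    {V : Type*} [Fintype V] [DecidableEq V]
    (G : MixedGraph V) (hG : G.NoSemiDirectedCycle) :
    ∀ T : Finset V, ¬ Relation.TransGen G.dirD T T := by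
  intro T h
  obtain ⟨S, hd, hp⟩ := Relation.TransGen.head'_iff.mp h
  obtain ⟨_, h2, _, v, hv, w, hw, hvw⟩ := hd
  exact hG v w hvw (G.reach_of_path h2 hp w hw v hv)
end
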